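/- arXiv:2402.05836 — 2 statements merged into one kernel-verified Lean document; each statement's English description precedes it below -/
import Mathlib

section
/- Let k be a field, n ≥ 1, and let F be a finite separable field extension of the rational function field k(t₁,…,tₙ). Let 𝒪_F be the integral closure of k[t₁,…,tₙ] in F. Then the set of primes of 𝒪_F that are maximal ideals 𝔫 whose residue field 𝒪_F/𝔫 is a separable (algebraic) extension of k is dense in Spec(𝒪_F) with respect to the Zariski topology. -/
/-!
Write `A = k[t₁,…,tₙ]` and let `B` be the integral closure of `A` in `F`, which is a finite
`A`-module because `A` is normal and Noetherian and `F / Frac A` is separable. Separability also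
says that `B` is unramified over `A` at the generic point, so the unramified locus, being open, is
dense in `Spec B`. At an unramified point the residue field extension is separable; hence an
unramified point of `Spec B` lying over a closed point of `Spec A` with residue field separable
over `k` is again such a point. Since `Spec B → Spec A` is closed and surjective and only the
generic point lies over the generic point, preimages of dense sets are dense, and the question is
reduced to `Spec A`. There, a nonzero polynomial is nonzero at some point with coordinates in the
separable closure of `k`, which is an infinite field, and the kernel of evaluation at that point is
a maximal ideal of the required kind.
-/

open Algebra PrimeSpectrum

/-- The closed points of `Spec R` whose residue field is a separable extension of the base `k`.
At a closed point the residue field is `R ⧸ P` itself, so no localization is needed. -/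
def separableClosedPoints (k R : Type*) [CommRing k] [CommRing R] [Algebra k R] :
    Set (PrimeSpectrum R) :=
  {P | P.asIdeal.IsMaximal ∧ Algebra.IsSeparable k (R ⧸ P.asIdeal)}

section AffineSpace

theorem infinite_of_isSepClosed (K : Type*) [Field K] [IsSepClosed K] : Infinite K := by
  by_contra h
  -- A finite field is perfect, so separably closed would mean algebraically closed.
  have : Finite K := not_infinite_iff_finite.mp h
  have : IsAlgClosed K := inferInstance
  exact h inferInstance

theorem exists_aeval_mvPolynomial_ne_zero {σ k : Type*} (L : Type*) [Field k] [Field L]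
    [Algebra k L] [Infinite L] {f : MvPolynomial σ k} (hf : f ≠ 0) :
    ∃ a : σ → L, MvPolynomial.aeval a f ≠ 0 := by
  by_contra! h
  refine hf (MvPolynomial.map_injective _ (algebraMap k L).injective ?_)
  refine MvPolynomial.funext fun a ↦ ?_
  rw [MvPolynomial.eval_map, ← MvPolynomial.aeval_def, h a, map_zero, map_zero]

theorem ker_mem_separableClosedPoints {k R L : Type*} [Field k] [CommRing R] [Algebra k R]
    [Field L] [Algebra k L] [Algebra.IsSeparable k L] (φ : R →ₐ[k] L) :
    ⟨RingHom.ker φ, RingHom.ker_isPrime φ⟩ ∈ separableClosedPoints k R := by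
  have hmax : (RingHom.ker φ).IsMaximal := Ideal.Quotient.maximal_of_isField _ <|
    (Ideal.quotientKerEquivRange φ).toMulEquiv.isField φ.range.isField_of_algebraic
  let := Ideal.Quotient.field (RingHom.ker φ)
  exact ⟨hmax, .of_algHom _ _ (Ideal.kerLiftAlg φ)⟩

theorem dense_separableClosedPoints_mvPolynomial (k σ : Type*) [Field k] :
    Dense (separableClosedPoints k (MvPolynomial σ k)) := by
  rw [isTopologicalBasis_basic_opens.dense_iff]
  rintro _ ⟨f, rfl⟩ ⟨Q, hfQ⟩
  have hf : f ≠ 0 := fun h ↦ hfQ (h ▸ zero_mem _)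
  have := infinite_of_isSepClosed (SeparableClosure k)
  obtain ⟨a, ha⟩ := exists_aeval_mvPolynomial_ne_zero (SeparableClosure k) hf
  exact ⟨_, ha, ker_mem_separableClosedPoints (MvPolynomial.aeval a)⟩

end AffineSpace

section IntegralExtension

variable {A B : Type*} [CommRing A] [CommRing B] [Algebra A B]

theorem dense_preimage_comap_of_isIntegral [IsDomain B] [Algebra.IsIntegral A B] [FaithfulSMul A B]
    {s : Set (PrimeSpectrum A)} (hs : Dense s) : Dense (comap (algebraMap A B) ⁻¹' s) := by
  have : IsDomain A := (FaithfulSMul.algebraMap_injective A B).isDomain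
  rw [dense_iff_inter_open]
  rintro U hU ⟨Q, hQ⟩
  have hbot : (⊥ : PrimeSpectrum B) ∈ U := ((le_iff_specializes ⊥ Q).mp bot_le).mem_open hU hQ
  have hclosed : IsClosed (comap (algebraMap A B) '' Uᶜ) :=
    isClosedMap_comap_of_isIntegral _ (algebraMap_isIntegral_iff.mpr ‹_›) _ hU.isClosed_compl
  have hbot' : (⊥ : PrimeSpectrum A) ∉ comap (algebraMap A B) '' Uᶜ := by
    rintro ⟨P, hP, hPbot⟩
    have : P = ⊥ := PrimeSpectrum.ext (Ideal.eq_bot_of_comap_eq_bot (congrArg asIdeal hPbot))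
    exact hP (this ▸ hbot)
  obtain ⟨p, hpU, hps⟩ := hs.inter_open_nonempty _ hclosed.isOpen_compl ⟨⊥, hbot'⟩
  obtain ⟨P, rfl⟩ := Algebra.IsIntegral.comap_surjective A B p
  exact ⟨P, by_contra fun hP ↦ hpU ⟨P, hP, rfl⟩, hps⟩

theorem dense_unramifiedLocus (F : Type*) [IsDomain B] [CommRing F] [Algebra B F] [Algebra A F]
    [IsScalarTower A B F] [EssFiniteType A B] [IsFractionRing B F] [FormallyUnramified A F] :
    Dense (unramifiedLocus A B) := by
  have : IsLocalization (⊥ : Ideal B).primeCompl F := by rwa [Ideal.primeCompl_bot]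
  let e := IsLocalization.algEquiv (⊥ : Ideal B).primeCompl F (Localization.AtPrime (⊥ : Ideal B))
  exact isOpen_unramifiedLocus.dense ⟨⊥, .of_equiv (e.restrictScalars A)⟩

variable {k : Type*} [Field k] [Algebra k A] [Algebra k B] [IsScalarTower k A B]

theorem mem_separableClosedPoints_of_mem_unramifiedLocus [Algebra.IsIntegral A B]
    [EssFiniteType A B] {P : PrimeSpectrum B} (hP : P ∈ unramifiedLocus A B)
    (hp : comap (algebraMap A B) P ∈ separableClosedPoints k A) :
    P ∈ separableClosedPoints k B := by
  obtain ⟨hpmax, hpsep⟩ := hp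
  set p := (comap (algebraMap A B) P).asIdeal
  have : P.asIdeal.LiesOver p := ⟨rfl⟩
  have hPmax : P.asIdeal.IsMaximal := .of_liesOver_isMaximal P.asIdeal p
  have : IsUnramifiedAt A P.asIdeal := hP
  let := Localization.AtPrime.algebraOfLiesOver p P.asIdeal
  let := Ideal.Quotient.field p
  let := Ideal.Quotient.field P.asIdeal
  have : Algebra.IsSeparable (A ⧸ p) (B ⧸ P.asIdeal) :=
    isSeparable_residueField_iff.mp inferInstance
  exact ⟨hPmax, .trans k (A ⧸ p) (B ⧸ P.asIdeal)⟩

theorem dense_separableClosedPoints_of_finite (F : Type*) [IsDomain B] [CommRing F] [Algebra B F]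
    [Algebra A F] [IsScalarTower A B F] [Module.Finite A B] [FaithfulSMul A B] [IsFractionRing B F]
    [FormallyUnramified A F] (hA : Dense (separableClosedPoints k A)) :
    Dense (separableClosedPoints k B) :=
  have hdense : Dense (unramifiedLocus A B ∩
      comap (algebraMap A B) ⁻¹' separableClosedPoints k A) :=
    (dense_unramifiedLocus F).inter_of_isOpen_left (dense_preimage_comap_of_isIntegral hA)
      isOpen_unramifiedLocus
  hdense.mono fun _ hP ↦ mem_separableClosedPoints_of_mem_unramifiedLocus hP.1 hP.2

end IntegralExtension

theorem dense_separable_maximal_spectrum_integralClosure_general {k A B : Type*} (K F : Type*)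
    [Field k] [CommRing A] [IsDomain A] [IsNoetherianRing A] [IsIntegrallyClosed A] [Algebra k A]
    [Field K] [Algebra A K] [IsFractionRing A K]
    [Field F] [Algebra K F] [FiniteDimensional K F] [Algebra.IsSeparable K F]
    [Algebra A F] [IsScalarTower A K F]
    [CommRing B] [Algebra B F] [Algebra A B] [IsScalarTower A B F] [IsIntegralClosure B A F]
    [Algebra k B] [IsScalarTower k A B]
    (hA : Dense (separableClosedPoints k A)) : Dense (separableClosedPoints k B) := by
  have : IsDomain B := (IsIntegralClosure.algebraMap_injective B A F).isDomain
  have : Module.Finite A B := IsIntegralClosure.finite A K F B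
  have : IsFractionRing B F := IsIntegralClosure.isFractionRing_of_finite_extension A K F B
  have : FaithfulSMul A F := .trans A K F
  have : FaithfulSMul A B := .tower_bot A B F
  have : FormallyUnramified A K := .of_isLocalization (nonZeroDivisors A)
  have : FormallyUnramified K F := .of_isSeparable K F
  have : FormallyUnramified A F := .comp A K F
  exact dense_separableClosedPoints_of_finite F hA

/-- Let `k` be a field, `n ≥ 1`, and `F` a finite separable field extension of
the rational function field `k(t₁,…,tₙ)` (the fraction field of `k[t₁,…,tₙ]`).  Let `𝒪_F` be
the integral closure of `k[t₁,…,tₙ]` in `F`.  Then the set of maximal ideals of `𝒪_F` whose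
residue field is a separable extension of `k` is dense in `Spec 𝒪_F`. -/
theorem dense_separable_maximal_spectrum_integralClosure
    (k : Type*) [Field k] (n : ℕ) (hn : 1 ≤ n)
    (F : Type*) [Field F]
    [Algebra (FractionRing (MvPolynomial (Fin n) k)) F]
    [FiniteDimensional (FractionRing (MvPolynomial (Fin n) k)) F]
    [Algebra.IsSeparable (FractionRing (MvPolynomial (Fin n) k)) F]
    [Algebra (MvPolynomial (Fin n) k) F]
    [IsScalarTower (MvPolynomial (Fin n) k) (FractionRing (MvPolynomial (Fin n) k)) F]
    [Algebra k F] [IsScalarTower k (MvPolynomial (Fin n) k) F] :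
    Dense {P : PrimeSpectrum (integralClosure (MvPolynomial (Fin n) k) F) |
      P.asIdeal.IsMaximal ∧
      Algebra.IsSeparable k ((integralClosure (MvPolynomial (Fin n) k) F) ⧸ P.asIdeal)} :=
  dense_separable_maximal_spectrum_integralClosure_general
    (FractionRing (MvPolynomial (Fin n) k)) F (dense_separableClosedPoints_mvPolynomial k (Fin n))
end

section
/- Let R be a commutative unitary ring, B an R-algebra, 𝔭 a prime ideal of B, and m, s positive integers with m ≤ s. Let σ be an R-algebra automorphism of B with σ(𝔭) = 𝔭 such that σ(b) − b ∈ 𝔭^{s+1} for all b ∈ B. Then for every R-algebra C and every R-algebra homomorphism ψ : B → C[t]/(t^{m+1}) such that ψ(x) lies in the ideal generated by the class of t for every x ∈ 𝔭^{s−m+1}, one has ψ ∘ σ = ψ. -/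
/-!
It suffices that `ψ (𝔭^{s+1}) = 0`. Let `K = (t)`, the kernel of the constant term map on
`A = C[t]/(t^{m+1})`, and let `J = ψ(𝔭) A`. Because the constants split off, `J ⊆ J₀ + K` where `J₀`
is generated by the constant terms of `J`. The hypothesis `J^{s-m+1} ⊆ K` says that
`J₀^{s-m+1} = 0`, so every term `J₀^i K^{s+1-i}` in the binomial expansion of `(J₀ + K)^{s+1}` with
`i ≥ s-m+1` vanishes, and the remaining ones lie in `K^{m+1} = 0`.
-/

universe u v

theorem ideal_sup_pow_le_pow_sup_pow {A : Type*} [CommSemiring A] (I J : Ideal A) {a b k : ℕ}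
    (hk : a + b ≤ k + 1) : (I ⊔ J) ^ k ≤ I ^ a ⊔ J ^ b := by
  rw [← Ideal.add_eq_sup, add_pow, Ideal.sum_eq_sup]
  refine Finset.sup_le fun i _ => Ideal.mul_le_left.trans ?_
  rcases le_or_gt a i with hi | hi
  · exact Ideal.mul_le_left.trans ((Ideal.pow_le_pow_right hi).trans le_sup_left)
  · exact Ideal.mul_le_right.trans
      ((Ideal.pow_le_pow_right (show b ≤ k - i by omega)).trans le_sup_right)

section Augmentation

variable {C A : Type*} [CommRing C] [CommRing A] [Algebra C A] (ε : A →ₐ[C] C)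

theorem sub_algebraMap_mem_ker (x : A) : x - algebraMap C A (ε x) ∈ RingHom.ker ε := by
  simp [RingHom.mem_ker]

theorem le_map_map_algebraMap_sup_ker (J : Ideal A) :
    J ≤ (J.map ε).map (algebraMap C A) ⊔ RingHom.ker ε := by
  intro x hx
  rw [← add_sub_cancel (algebraMap C A (ε x)) x]
  exact Ideal.add_mem _
    (Ideal.mem_sup_left (Ideal.mem_map_of_mem _ (Ideal.mem_map_of_mem ε hx)))
    (Ideal.mem_sup_right (sub_algebraMap_mem_ker ε x))

theorem pow_le_ker_pow_of_pow_le_ker {J : Ideal A} {a b k : ℕ}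
    (hJ : J ^ a ≤ RingHom.ker ε) (hk : a + b ≤ k + 1) : J ^ k ≤ RingHom.ker ε ^ b := by
  have constants_pow : (J.map ε).map (algebraMap C A) ^ a = ⊥ := by
    rw [← Ideal.map_pow, ← Ideal.map_pow, (Ideal.map_eq_bot_iff_le_ker ε).2 hJ, Ideal.map_bot]
  calc J ^ k
      ≤ ((J.map ε).map (algebraMap C A) ⊔ RingHom.ker ε) ^ k :=
        Ideal.pow_right_mono (le_map_map_algebraMap_sup_ker ε J) k
    _ ≤ (J.map ε).map (algebraMap C A) ^ a ⊔ RingHom.ker ε ^ b :=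
        ideal_sup_pow_le_pow_sup_pow _ _ hk
    _ = RingHom.ker ε ^ b := by rw [constants_pow, bot_sup_eq]

/-- `A` plays the role of the ring of jets `C[t]/(t^{m+1})`, `ε` that of the constant term and `n`
that of `m + 1`. The automorphism `σ` and the identity are replaced by two homomorphisms into `B`
that agree to order `k`. -/
theorem jet_comp_automorphism_eq_self_general {R B D : Type*} [CommSemiring R] [CommRing B]
    [Semiring D] [Algebra R B] [Algebra R D] [Algebra R A] {I : Ideal B} {a n k : ℕ}
    (hε : RingHom.ker ε ^ n = ⊥) (hk : a + n ≤ k + 1) {σ τ : D →ₐ[R] B}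
    (hστ : ∀ d, σ d - τ d ∈ I ^ k) (ψ : B →ₐ[R] A) (hψ : ∀ x ∈ I ^ a, ψ x ∈ RingHom.ker ε) :
    ψ.comp σ = ψ.comp τ := by
  have image_pow_le_ker : I.map ψ ^ a ≤ RingHom.ker ε := by
    rw [← Ideal.map_pow]
    exact Ideal.map_le_iff_le_comap.2 hψ
  have image_pow_eq_bot : (I ^ k).map ψ = ⊥ := by
    rw [Ideal.map_pow, ← le_bot_iff, ← hε]
    exact pow_le_ker_pow_of_pow_le_ker ε image_pow_le_ker hk
  ext d
  exact (RingHom.sub_mem_ker_iff ψ).1 ((Ideal.map_eq_bot_iff_le_ker ψ).1 image_pow_eq_bot (hστ d))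

end Augmentation

section Jet

open Polynomial

variable (C : Type*) [CommRing C] (m : ℕ)

/-- The constant term of an `m`-jet, that is, of an element of `C[t]/(t^{m+1})`. -/
noncomputable def jetConstantCoeff : (C[X] ⧸ Ideal.span {(X : C[X]) ^ (m + 1)}) →ₐ[C] C :=
  Ideal.Quotient.liftₐ _ (aeval 0) fun f hf => by
    obtain ⟨g, rfl⟩ := Ideal.mem_span_singleton.1 hf
    simp

theorem ker_jetConstantCoeff :
    RingHom.ker (jetConstantCoeff C m) =
      Ideal.span {Ideal.Quotient.mk (Ideal.span {(X : C[X]) ^ (m + 1)}) X} := by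
  have ker_aeval_zero : RingHom.ker (aeval 0 : C[X] →ₐ[C] C) = Ideal.span {X} := by
    ext f
    rw [RingHom.mem_ker, Ideal.mem_span_singleton, X_dvd_iff, coeff_zero_eq_aeval_zero]
  calc RingHom.ker (jetConstantCoeff C m)
      = (RingHom.ker (aeval 0 : C[X] →ₐ[C] C)).map (Ideal.Quotient.mk _) :=
        Ideal.ker_quotient_lift _ _
    _ = Ideal.span {Ideal.Quotient.mk _ X} := by
        rw [ker_aeval_zero, Ideal.map_span, Set.image_singleton]

theorem ker_jetConstantCoeff_pow : RingHom.ker (jetConstantCoeff C m) ^ (m + 1) = ⊥ := by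
  rw [ker_jetConstantCoeff, Ideal.span_singleton_pow, Ideal.span_singleton_eq_bot, ← map_pow]
  exact Ideal.Quotient.eq_zero_iff_mem.2 (Ideal.mem_span_singleton_self _)

end Jet

/-- Let `B` be an `R`-algebra, `𝔭` a prime of `B`, `1 ≤ m ≤ s`, and `σ` an
`R`-algebra automorphism of `B` with `σ(𝔭) = 𝔭` and `σ b − b ∈ 𝔭^{s+1}` for all `b`.  Then for
every `R`-algebra `C` and every `R`-algebra map `ψ : B → C[t]/(t^{m+1})` sending `𝔭^{s−m+1}`
into the ideal generated by the class of `t`, one has `ψ ∘ σ = ψ`. -/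
theorem jet_comp_automorphism_eq_self
    (R B : Type u) [CommRing R] [CommRing B] [Algebra R B]
    (p : Ideal B) [p.IsPrime] (m s : ℕ) (hm : 1 ≤ m) (hms : m ≤ s)
    (σ : B ≃ₐ[R] B) (hσp : p.map (σ : B →+* B) = p)
    (hσ : ∀ b : B, σ b - b ∈ p ^ (s + 1)) :
    ∀ (C : Type v) [CommRing C] [Algebra R C]
      (ψ : B →ₐ[R] Polynomial C ⧸ Ideal.span {(Polynomial.X : Polynomial C) ^ (m + 1)}),
      (∀ x ∈ p ^ (s - m + 1),
        ψ x ∈ Ideal.span {Ideal.Quotient.mk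
          (Ideal.span {(Polynomial.X : Polynomial C) ^ (m + 1)}) Polynomial.X}) →
      ψ.comp σ.toAlgHom = ψ := by
  intro C _ _ ψ hψ
  exact jet_comp_automorphism_eq_self_general (jetConstantCoeff C m) (a := s - m + 1) (τ := .id R B)
    (ker_jetConstantCoeff_pow C m) (by omega) hσ ψ (by rwa [ker_jetConstantCoeff])
end
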